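/- Let f : S¹ → ℝ be smooth with Fourier series f(θ) = Σ_{n∈ℤ} f_n e^{inθ}, and for k ≥ 2 set h_k = Σ_{n=1}^{k−1} n(k−n) f_n f_{k−n}. Define g(θ) = 2 Re( Σ_{k=2}^∞ (h_k/(1 − k²)) e^{ikθ} ) (this is the function H (1+∂_θ²)^{−1}(f′ · Hf′)). Then sup_θ |g(θ)| ≤ 4π Σ_{n=1}^∞ n |f_n|². -/

import Mathlib

open MeasureTheory Real

/-- The `n`-th Fourier coefficient of a `2π`-periodic function `f : ℝ → ℝ`. -/
noncomputable def fourierC (f : ℝ → ℝ) (n : ℤ) : ℂ :=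
  (1 / (2 * π)) * ∫ θ in (0:ℝ)..(2 * π), (f θ : ℂ) * Complex.exp (-Complex.I * (n : ℂ) * (θ : ℂ))

/-- The Hilbert transform on the circle, sending `Σ cₙ e^{inθ}` to `Σ (−i sgn n) cₙ e^{inθ}`. -/
noncomputable def hilbertT (f : ℝ → ℝ) (θ : ℝ) : ℝ :=
  (∑' n : ℤ, -Complex.I * ((n.sign : ℤ) : ℂ) * fourierC f n *
    Complex.exp (Complex.I * (n : ℂ) * (θ : ℂ))).re

/-- The coefficient `h_k = Σ_{n=1}^{k−1} n (k−n) f_n f_{k−n}` built from the Fourier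
coefficients of `f`. -/
noncomputable def hCoef (f : ℝ → ℝ) (k : ℤ) : ℂ :=
  ∑ n ∈ Finset.Ioo (0:ℤ) k, (n : ℂ) * ((k : ℂ) - (n : ℂ)) * fourierC f n * fourierC f (k - n)

lemma aux_fourierC_deriv (g g' : ℝ → ℝ) (hg : ∀ x, HasDerivAt g (g' x) x) (hg' : Continuous g')
    (hper : g (2 * π) = g 0) (n : ℤ) (hn : n ≠ 0) :
    fourierC g n = fourierC g' n / (Complex.I * n) := by
  have hn' : (n : ℂ) ≠ 0 := by exact_mod_cast hn
  have hc : -Complex.I * (n : ℂ) ≠ 0 := mul_ne_zero (neg_ne_zero.mpr Complex.I_ne_zero) hn'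
  have hv : ∀ x : ℝ, HasDerivAt
      (fun x : ℝ => Complex.exp (-Complex.I * (n : ℂ) * (x : ℂ)) / (-Complex.I * (n : ℂ)))
      (Complex.exp (-Complex.I * (n : ℂ) * (x : ℂ))) x := by
    intro x
    have h1 : HasDerivAt (fun x : ℝ => -Complex.I * (n : ℂ) * (x : ℂ)) (-Complex.I * (n : ℂ)) x := by
      simpa using (Complex.ofRealCLM.hasDerivAt (x := x)).const_mul (-Complex.I * (n : ℂ))
    have h2 := (h1.cexp).div_const (-Complex.I * (n : ℂ))
    rwa [mul_div_assoc, div_self hc, mul_one] at h2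
  have hu : ∀ x : ℝ, HasDerivAt (fun x : ℝ => (g x : ℂ)) (g' x : ℂ) x := fun x => (hg x).ofReal_comp
  have key := intervalIntegral.integral_mul_deriv_eq_deriv_mul (a := 0) (b := 2 * π)
    (fun x _ => hu x) (fun x _ => hv x)
    ((Complex.continuous_ofReal.comp hg').intervalIntegrable _ _)
    ((by fun_prop : Continuous fun x : ℝ =>
      Complex.exp (-Complex.I * (n : ℂ) * (x : ℂ))).intervalIntegrable _ _)
  have he : Complex.exp (-Complex.I * (n : ℂ) * ((2 * π : ℝ) : ℂ)) = 1 := by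
    rw [Complex.exp_eq_one_iff]
    exact ⟨-n, by push_cast; ring⟩
  have hI : (∫ x in (0:ℝ)..(2 * π), (g' x : ℂ) *
      (Complex.exp (-Complex.I * (n : ℂ) * (x : ℂ)) / (-Complex.I * (n : ℂ)))) =
      (∫ x in (0:ℝ)..(2 * π), (g' x : ℂ) * Complex.exp (-Complex.I * (n : ℂ) * (x : ℂ)))
        / (-Complex.I * (n : ℂ)) := by
    rw [← intervalIntegral.integral_div]
    congr 1
    ext x
    ring
  unfold fourierC
  rw [key, hI, he, hper]
  simp only [Complex.ofReal_zero, mul_zero, Complex.exp_zero, sub_self, zero_sub]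
  have := Complex.I_ne_zero
  field_simp

lemma aux_fourierC_bound (g : ℝ → ℝ) (hg : Continuous g) :
    ∃ C : ℝ, ∀ n : ℤ, ‖fourierC g n‖ ≤ C := by
  obtain ⟨M, hM⟩ := (isCompact_Icc (a := (0:ℝ)) (b := 2 * π)).exists_bound_of_continuousOn
    hg.continuousOn
  refine ⟨‖(1 / (2 * π) : ℂ)‖ * (M * |2 * π - 0|), fun n => ?_⟩
  unfold fourierC
  rw [norm_mul]
  refine mul_le_mul_of_nonneg_left ?_ (norm_nonneg _)
  refine intervalIntegral.norm_integral_le_of_norm_le_const fun x hx => ?_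
  rw [Set.uIoc_of_le (by positivity)] at hx
  have h1 : ‖Complex.exp (-Complex.I * (n : ℂ) * (x : ℂ))‖ = 1 := by
    rw [Complex.norm_exp]; simp
  rw [norm_mul, h1, mul_one, Complex.norm_real]
  exact hM x ⟨hx.1.le, hx.2⟩

lemma aux_summable (f : ℝ → ℝ) (hf : ContDiff ℝ (⊤ : ℕ∞) f)
    (hper : ∀ θ : ℝ, f (θ + 2 * π) = f θ) :
    Summable fun n : ℕ => ((n : ℝ) + 1) * ‖fourierC f ((n : ℤ) + 1)‖ ^ 2 := by
  have hf2 : ContDiff ℝ 2 f := hf.of_le (WithTop.coe_le_coe.mpr (le_top : (2 : ℕ∞) ≤ ⊤))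
  have hf1 : ContDiff ℝ 1 (deriv f) := by
    have h : ContDiff ℝ (1 + 1) f := by simpa [one_add_one_eq_two] using hf2
    exact (contDiff_succ_iff_deriv.mp h).2.2
  have hd1 : ∀ x, HasDerivAt f (deriv f x) x :=
    fun x => (hf2.differentiable (by norm_num) x).hasDerivAt
  have hd2 : ∀ x, HasDerivAt (deriv f) (deriv (deriv f) x) x :=
    fun x => (hf1.differentiable (by norm_num) x).hasDerivAt
  have hc2 : Continuous (deriv (deriv f)) := hf1.continuous_deriv le_rfl
  have hp1 : deriv f (2 * π) = deriv f 0 := by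
    have h : (fun θ => f (θ + 2 * π)) = f := funext hper
    have h2 := deriv_comp_add_const f (2 * π) 0
    rw [h, zero_add] at h2
    exact h2.symm
  have hp0 : f (2 * π) = f 0 := by simpa using hper 0
  obtain ⟨C, hC⟩ := aux_fourierC_bound _ hc2
  have hs : Summable fun n : ℕ => C ^ 2 * (1 / ((n + 1 : ℕ) : ℝ) ^ 3) :=
    ((summable_nat_add_iff 1).mpr
      (Real.summable_one_div_nat_pow.mpr (by norm_num : 1 < 3))).mul_left _
  refine Summable.of_nonneg_of_le (fun n => by positivity) (fun n => ?_) hs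
  have hn : ((n : ℤ) + 1) ≠ 0 := by omega
  have hpos : (0 : ℝ) < (n : ℝ) + 1 := by positivity
  have hnorm : ‖(((n : ℤ) + 1 : ℤ) : ℂ)‖ = (n : ℝ) + 1 := by
    rw [Complex.norm_intCast]; push_cast; exact abs_of_pos hpos
  rw [aux_fourierC_deriv f _ hd1 hf1.continuous hp0 _ hn,
    aux_fourierC_deriv _ _ hd2 hc2 hp1 _ hn]
  simp only [norm_div, norm_mul, Complex.norm_I, one_mul, hnorm]
  have h1 : ‖fourierC (deriv (deriv f)) ((n : ℤ) + 1)‖ ^ 2 ≤ C ^ 2 :=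
    pow_le_pow_left₀ (norm_nonneg _) (hC _) 2
  calc _ = ‖fourierC (deriv (deriv f)) ((n : ℤ) + 1)‖ ^ 2 * (1 / ((n + 1 : ℕ) : ℝ) ^ 3) := by
        push_cast; field_simp
    _ ≤ _ := mul_le_mul_of_nonneg_right h1 (by positivity)

lemma aux_hCoef (f : ℝ → ℝ) (k : ℕ) :
    ‖hCoef f ((k : ℤ) + 2)‖ ≤
      ∑ i ∈ Finset.range (k + 1), (((i : ℝ) + 1) * ‖fourierC f ((i : ℤ) + 1)‖) ^ 2 := by
  set b : ℕ → ℝ := fun i => ((i : ℝ) + 1) * ‖fourierC f ((i : ℤ) + 1)‖ with hb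
  have h1 : hCoef f ((k : ℤ) + 2) = ∑ i ∈ Finset.range (k + 1),
      ((i : ℂ) + 1) * (((k - i : ℕ) : ℂ) + 1) * fourierC f ((i : ℤ) + 1) *
        fourierC f (((k - i : ℕ) : ℤ) + 1) := by
    unfold hCoef
    symm
    refine Finset.sum_bij (fun i _ => (i : ℤ) + 1) ?_ ?_ ?_ ?_
    · intro i hi
      simp only [Finset.mem_range, Finset.mem_Ioo] at *
      omega
    · intro i _ j _ h
      omega
    · intro n hn
      simp only [Finset.mem_Ioo] at hn
      exact ⟨(n - 1).toNat, by simp only [Finset.mem_range]; omega, by omega⟩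
    · intro i hi
      have hi' : i ≤ k := by simp only [Finset.mem_range] at hi; omega
      have e : (k : ℤ) + 2 - ((i : ℤ) + 1) = ((k - i : ℕ) : ℤ) + 1 := by omega
      rw [e]
      push_cast [Nat.cast_sub hi']
      ring
  have hn : ∀ i : ℕ, ‖(i : ℂ) + 1‖ = (i : ℝ) + 1 := by
    intro i
    have : ((i : ℂ) + 1) = ((i + 1 : ℕ) : ℂ) := by push_cast; rfl
    rw [this, Complex.norm_natCast]; push_cast; rfl
  have h2 : ‖hCoef f ((k : ℤ) + 2)‖ ≤ ∑ i ∈ Finset.range (k + 1), b i * b (k - i) := by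
    rw [h1]
    refine (norm_sum_le _ _).trans (le_of_eq (Finset.sum_congr rfl fun i _ => ?_))
    simp only [norm_mul, hn, hb]
    ring
  have h3 : ∑ i ∈ Finset.range (k + 1), b (k - i) ^ 2 = ∑ i ∈ Finset.range (k + 1), b i ^ 2 := by
    have := Finset.sum_range_reflect (fun i => b i ^ 2) (k + 1)
    simpa using this
  have h4 : ∑ i ∈ Finset.range (k + 1), b i * b (k - i) ≤
      ∑ i ∈ Finset.range (k + 1), (b i ^ 2 + b (k - i) ^ 2) / 2 :=
    Finset.sum_le_sum fun i _ => by nlinarith [sq_nonneg (b i - b (k - i))]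
  rw [← Finset.sum_div, Finset.sum_add_distrib, h3] at h4
  linarith

lemma aux_abel (d : ℕ → ℝ) (K : ℕ) :
    ∑ k ∈ Finset.range K, (∑ i ∈ Finset.range (k + 1), d i) / (((k : ℝ) + 2) ^ 2 - 1) +
      (∑ i ∈ Finset.range K, d i) * ((1 / ((K : ℝ) + 1) + 1 / ((K : ℝ) + 2)) / 2) =
    ∑ i ∈ Finset.range K, d i * ((1 / ((i : ℝ) + 1) + 1 / ((i : ℝ) + 2)) / 2) := by
  induction K with
  | zero => simp
  | succ K ih =>
    rw [Finset.sum_range_succ, Finset.sum_range_succ (fun i => d i * _) K, ← ih,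
      Finset.sum_range_succ d K]
    have e : ((K : ℝ) + 2) ^ 2 - 1 = ((K : ℝ) + 1) * ((K : ℝ) + 3) := by ring
    rw [e]
    push_cast
    have h1 : (K : ℝ) + 1 ≠ 0 := by positivity
    have h2 : (K : ℝ) + 2 ≠ 0 := by positivity
    have h3 : (K : ℝ) + 3 ≠ 0 := by positivity
    have e2 : (K : ℝ) + 1 + 1 = K + 2 := by ring
    have e3 : (K : ℝ) + 1 + 2 = K + 3 := by ring
    rw [e2, e3]
    field_simp
    ring

/-- The function `g = H (1+∂²)⁻¹(f′·Hf′)`, given by the Fourier series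
`g(θ) = 2 Re Σ_{k≥2} (h_k/(1−k²)) e^{ikθ}`, satisfies `sup_θ |g| ≤ 4π Σ_{n≥1} n |f_n|²`. -/
theorem sup_bound_via_hilbert_double_series (f : ℝ → ℝ)
    (hf : ContDiff ℝ (⊤ : ℕ∞) f)
    (hper : ∀ θ : ℝ, f (θ + 2 * π) = f θ) :
    ∀ θ : ℝ,
      |2 * (∑' k : ℕ, hCoef f ((k : ℤ) + 2) / (1 - (((k : ℤ) + 2 : ℤ) : ℂ) ^ 2) *
          Complex.exp (Complex.I * (((k : ℤ) + 2 : ℤ) : ℂ) * (θ : ℂ))).re|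
        ≤ 4 * π * ∑' n : ℕ, ((n : ℝ) + 1) * ‖fourierC f ((n : ℤ) + 1)‖ ^ 2 := by
  intro θ
  have hS := aux_summable f hf hper
  set T := ∑' n : ℕ, ((n : ℝ) + 1) * ‖fourierC f ((n : ℤ) + 1)‖ ^ 2 with hT
  set d : ℕ → ℝ := fun i => (((i : ℝ) + 1) * ‖fourierC f ((i : ℤ) + 1)‖) ^ 2 with hd
  have hd0 : ∀ i, 0 ≤ d i := fun i => sq_nonneg _
  set a : ℕ → ℝ := fun k => (∑ i ∈ Finset.range (k + 1), d i) / (((k : ℝ) + 2) ^ 2 - 1) with ha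
  have hpos : ∀ k : ℕ, (0 : ℝ) < ((k : ℝ) + 2) ^ 2 - 1 := by
    intro k
    have : (0 : ℝ) ≤ k := k.cast_nonneg
    nlinarith
  have ha0 : ∀ k, 0 ≤ a k := fun k => div_nonneg (Finset.sum_nonneg fun i _ => hd0 i) (hpos k).le
  have hT0 : 0 ≤ T := tsum_nonneg fun n => by positivity
  have hpart : ∀ K, ∑ k ∈ Finset.range K, a k ≤ T := by
    intro K
    have h1 := aux_abel d K
    have h2 : 0 ≤ (∑ i ∈ Finset.range K, d i) *
        ((1 / ((K : ℝ) + 1) + 1 / ((K : ℝ) + 2)) / 2) :=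
      mul_nonneg (Finset.sum_nonneg fun i _ => hd0 i) (by positivity)
    have h3 : ∑ i ∈ Finset.range K, d i * ((1 / ((i : ℝ) + 1) + 1 / ((i : ℝ) + 2)) / 2) ≤
        ∑ i ∈ Finset.range K, ((i : ℝ) + 1) * ‖fourierC f ((i : ℤ) + 1)‖ ^ 2 := by
      refine Finset.sum_le_sum fun i _ => ?_
      have h4 : 1 / ((i : ℝ) + 2) ≤ 1 / ((i : ℝ) + 1) :=
        one_div_le_one_div_of_le (by positivity) (by linarith)
      calc _ ≤ d i * (1 / ((i : ℝ) + 1)) :=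
            mul_le_mul_of_nonneg_left (by linarith) (hd0 i)
        _ = _ := by simp only [hd]; field_simp
    have h5 := hS.sum_le_tsum (Finset.range K) (fun i _ => by positivity)
    simp only [ha]
    linarith
  have hsa : Summable a := summable_of_sum_range_le ha0 hpart
  have hta : ∑' k, a k ≤ T := Real.tsum_le_of_sum_range_le ha0 hpart
  have hmain := tsum_of_norm_bounded (f := fun k : ℕ =>
      hCoef f ((k : ℤ) + 2) / (1 - (((k : ℤ) + 2 : ℤ) : ℂ) ^ 2) *
          Complex.exp (Complex.I * (((k : ℤ) + 2 : ℤ) : ℂ) * (θ : ℂ))) hsa.hasSum (fun k => by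
    have h1 : ‖Complex.exp (Complex.I * (((k : ℤ) + 2 : ℤ) : ℂ) * (θ : ℂ))‖ = 1 := by
      rw [Complex.norm_exp]; simp
    have h2 : ‖(1 - (((k : ℤ) + 2 : ℤ) : ℂ) ^ 2)‖ = ((k : ℝ) + 2) ^ 2 - 1 := by
      have : (1 - (((k : ℤ) + 2 : ℤ) : ℂ) ^ 2) = ((1 - ((k : ℝ) + 2) ^ 2 : ℝ) : ℂ) := by
        push_cast; rfl
      rw [this, Complex.norm_real, Real.norm_eq_abs, abs_sub_comm, abs_of_pos (hpos k)]
    rw [norm_mul, norm_div, h1, h2, mul_one]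
    exact div_le_div_of_nonneg_right (aux_hCoef f k) (hpos k).le)
  have hre := (Complex.abs_re_le_norm _).trans (hmain.trans hta)
  rw [abs_mul, abs_two]
  have hpi := Real.pi_gt_three
  nlinarith
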